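/- Let n ≥ 3, let W be a 4-tensor on ℝⁿ satisfying W_{ijkl} = −W_{jikl} = −W_{ijlk}, W_{ijkl} = W_{klij}, the first Bianchi identity W_{ijkl} + W_{iklj} + W_{iljk} = 0, and Σ_i W_{ijil} = 0 for all j, l, and let B be a symmetric trace-free n×n real matrix (tr B = 0). Then | (n/(n−2)) Σ_{i,j,k} B_{ij} B_{jk} B_{ik} − Σ_{i,j,k,l} W_{ijkl} B_{ik} B_{jl} | ≤ √((n−2)/(2(n−1))) ( |W|² + (2n/(n−2)) |B|² )^{1/2} |B|², where |W|² := Σ_{i,j,k,l} W_{ijkl}² and |B|² := Σ_{i,j} B_{ij}². -/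

import Mathlib

open Finset

/-!
On an `n`-dimensional Euclidean space, split the curvature-like tensor `½ B ∧ B` (Kulkarni–Nomizu
product) into its Weyl, traceless Ricci and scalar parts, `½ B ∧ B = V + R + S`. Pairing with `V`
and `R` extracts the two cubic expressions: `⟨W, V⟩ = 2 ∑ W i j k l * B i k * B j l` and
`⟨1 ∧ B, R⟩ = -4 tr B³`. Following Huisken, pair `W + (t / (n - 2)) • 1 ∧ B` with `V + t R`:
for `t² = n / 2` the two expressions appear with the required weights, and at the same time
`|V|² + t² |R|²` becomes a multiple of `|B|⁴`, because the contributions of `tr B⁴` cancel. One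
application of Cauchy–Schwarz then suffices.
-/

open Matrix

section CommRing

variable {ι R : Type*} [CommRing R]

/-- The Kulkarni–Nomizu product of two bilinear forms, as a 4-tensor in components. The sign is
such that `1 ∧ 1` is a positive multiple of the curvature tensor of the round sphere in the
convention where `∑ i, T i j i l` is the Ricci contraction. -/
def kulkarniNomizu (A B : Matrix ι ι R) (i j k l : ι) : R :=
  A i k * B j l + A j l * B i k - A i l * B j k - A j k * B i l

/-- A 4-tensor that changes sign under exchange of its first two and of its last two indices. -/
structure IsPairSkew (T : ι → ι → ι → ι → R) : Prop where
  swap_left : ∀ i j k l, T j i k l = -T i j k l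
  swap_right : ∀ i j k l, T i j l k = -T i j k l

theorem isPairSkew_kulkarniNomizu (A B : Matrix ι ι R) : IsPairSkew (kulkarniNomizu A B) where
  swap_left _ _ _ _ := by unfold kulkarniNomizu; ring
  swap_right _ _ _ _ := by unfold kulkarniNomizu; ring

variable [Fintype ι]

/-- The componentwise pairing `∑ S i j k l * T i j k l` of 4-tensors, as a bilinear form. There is
no normalization for symmetries, so that `tensorDot W W` is `|W|²`. -/
def tensorDot : LinearMap.BilinForm R (ι → ι → ι → ι → R) :=
  LinearMap.mk₂ R (fun S T ↦ ∑ i, ∑ j, ∑ k, ∑ l, S i j k l * T i j k l)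
    (fun _ _ _ ↦ by simp only [Pi.add_apply, add_mul, sum_add_distrib])
    (fun _ _ _ ↦ by simp only [Pi.smul_apply, smul_eq_mul, mul_assoc, mul_sum])
    (fun _ _ _ ↦ by simp only [Pi.add_apply, mul_add, sum_add_distrib])
    (fun _ _ _ ↦ by simp only [Pi.smul_apply, smul_eq_mul, mul_left_comm, mul_sum])

theorem tensorDot_apply (S T : ι → ι → ι → ι → R) :
    tensorDot S T = ∑ i, ∑ j, ∑ k, ∑ l, S i j k l * T i j k l :=
  rfl

theorem tensorDot_comm (S T : ι → ι → ι → ι → R) : tensorDot S T = tensorDot T S := by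
  simp only [tensorDot_apply, mul_comm]

theorem tensorDot_kulkarniNomizu_left (A B : Matrix ι ι R) {T : ι → ι → ι → ι → R}
    (hT : IsPairSkew T) :
    tensorDot (kulkarniNomizu A B) T = 4 * ∑ i, ∑ j, ∑ k, ∑ l, A i k * B j l * T i j k l := by
  let F (i j k l : ι) : R := A i k * B j l * T i j k l
  have expand : ∀ i j k l, kulkarniNomizu A B i j k l * T i j k l =
      F i j k l + F j i l k + F i j l k + F j i k l := by
    intro i j k l
    simp only [F, kulkarniNomizu, hT.swap_left i j, hT.swap_right i j k l]
    ring
  have swap_right : ∑ i, ∑ j, ∑ k, ∑ l, F i j l k = ∑ i, ∑ j, ∑ k, ∑ l, F i j k l :=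
    sum_congr rfl fun _ _ ↦ sum_congr rfl fun _ _ ↦ sum_comm
  have swap_left : ∑ i, ∑ j, ∑ k, ∑ l, F j i k l = ∑ i, ∑ j, ∑ k, ∑ l, F i j k l := sum_comm
  have swap_both : ∑ i, ∑ j, ∑ k, ∑ l, F j i l k = ∑ i, ∑ j, ∑ k, ∑ l, F i j k l :=
    sum_comm.trans swap_right
  simp only [tensorDot_apply, expand, sum_add_distrib, swap_left, swap_right, swap_both]
  ring

theorem trace_mul_self_of_isSymm {B : Matrix ι ι R} (hB : B.IsSymm) :
    trace (B * B) = ∑ i, ∑ j, B i j ^ 2 := by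
  simp only [trace, diag_apply, Matrix.mul_apply, sq, hB.apply]

theorem trace_mul_mul_self_of_isSymm {B : Matrix ι ι R} (hB : B.IsSymm) :
    trace (B * B * B) = ∑ i, ∑ j, ∑ k, B i j * B j k * B i k := by
  simp only [trace, diag_apply, Matrix.mul_apply, sum_mul]
  refine sum_congr rfl fun i _ ↦ sum_comm.trans ?_
  simp only [hB.apply i]

theorem sum_mul_mul_mul_eq_trace_mul_trace (A B C D : Matrix ι ι R) :
    ∑ i, ∑ j, ∑ k, ∑ l, A i k * B j l * (C i k * D j l) =
      trace (A * Cᵀ) * trace (B * Dᵀ) := by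
  simp only [trace, diag_apply, Matrix.mul_apply, transpose_apply, sum_mul_sum, mul_mul_mul_comm]

theorem sum_mul_mul_mul_eq_trace_mul (A B C D : Matrix ι ι R) :
    ∑ i, ∑ j, ∑ k, ∑ l, A i k * B j l * (C i l * D j k) = trace (A * Dᵀ * B * Cᵀ) := by
  have trace_mul : ∀ P Q : Matrix ι ι R, trace (P * Q) = ∑ i, ∑ j, P i j * Q j i := fun _ _ ↦ rfl
  rw [mul_assoc (A * Dᵀ), trace_mul]
  simp only [Matrix.mul_apply, transpose_apply, sum_mul_sum]
  refine sum_congr rfl fun i _ ↦ sum_congr rfl fun j _ ↦ sum_congr rfl fun k _ ↦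
    sum_congr rfl fun l _ ↦ ?_
  ring

theorem tensorDot_kulkarniNomizu_kulkarniNomizu (A B C D : Matrix ι ι R) :
    tensorDot (kulkarniNomizu A B) (kulkarniNomizu C D) =
      4 * (trace (A * Cᵀ) * trace (B * Dᵀ) + trace (A * Dᵀ) * trace (B * Cᵀ) -
        trace (A * Dᵀ * B * Cᵀ) - trace (A * Cᵀ * B * Dᵀ)) := by
  have expand : ∀ i j k l, A i k * B j l * kulkarniNomizu C D i j k l =
      A i k * B j l * (C i k * D j l) + A i k * B j l * (D i k * C j l) -
        A i k * B j l * (C i l * D j k) - A i k * B j l * (D i l * C j k) := by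
    intro i j k l
    unfold kulkarniNomizu
    ring
  simp only [tensorDot_kulkarniNomizu_left A B (isPairSkew_kulkarniNomizu C D), expand,
    sum_add_distrib, sum_sub_distrib, sum_mul_mul_mul_eq_trace_mul_trace,
    sum_mul_mul_mul_eq_trace_mul]

variable [DecidableEq ι]

theorem tensorDot_one_kulkarniNomizu_eq_zero {W : ι → ι → ι → ι → R} (hW : IsPairSkew W)
    (htr : ∀ j l, ∑ i, W i j i l = 0) (M : Matrix ι ι R) :
    tensorDot (kulkarniNomizu 1 M) W = 0 := by
  have contract : ∀ i j, ∑ k, ∑ l, (1 : Matrix ι ι R) i k * M j l * W i j k l =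
      ∑ l, M j l * W i j i l := by
    intro i j
    rw [sum_comm]
    simp [one_apply, ite_mul]
  rw [tensorDot_kulkarniNomizu_left 1 M hW]
  simp only [contract]
  rw [sum_comm, sum_eq_zero, mul_zero]
  intro j _
  rw [sum_comm]
  simp only [← mul_sum, htr, mul_zero, sum_const_zero]

theorem tensorDot_one_kulkarniNomizu_one_kulkarniNomizu (M N : Matrix ι ι R) :
    tensorDot (kulkarniNomizu 1 M) (kulkarniNomizu 1 N) =
      4 * ((Fintype.card ι - 2) * trace (M * Nᵀ) + trace M * trace N) := by
  simp only [tensorDot_kulkarniNomizu_kulkarniNomizu, transpose_one, one_mul, mul_one, trace_one,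
    trace_transpose, trace_mul_comm Nᵀ M]
  ring

theorem tensorDot_kulkarniNomizu_self_one_kulkarniNomizu (B M : Matrix ι ι R) :
    tensorDot (kulkarniNomizu B B) (kulkarniNomizu 1 M) =
      8 * (trace B * trace (B * Mᵀ) - trace (B * B * Mᵀ)) := by
  rw [tensorDot_kulkarniNomizu_kulkarniNomizu]
  simp only [transpose_one, mul_one, trace_mul_cycle B Mᵀ B]
  ring

theorem tensorDot_add_smul_one_kulkarniNomizu_self {W : ι → ι → ι → ι → R} (hW : IsPairSkew W)
    (htr : ∀ j l, ∑ i, W i j i l = 0) {B : Matrix ι ι R} (hB : B.IsSymm) (hB0 : trace B = 0)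
    (c : R) :
    tensorDot (W + c • kulkarniNomizu 1 B) (W + c • kulkarniNomizu 1 B) =
      tensorDot W W + 4 * c ^ 2 * (Fintype.card ι - 2) * trace (B * B) := by
  have orthogonal := tensorDot_one_kulkarniNomizu_eq_zero hW htr B
  simp only [map_add, map_smul, LinearMap.add_apply, LinearMap.smul_apply, smul_eq_mul,
    tensorDot_comm W (kulkarniNomizu 1 B), orthogonal,
    tensorDot_one_kulkarniNomizu_one_kulkarniNomizu, hB.eq, hB0]
  ring

end CommRing

theorem tensorDot_sq_le {ι R : Type*} [Fintype ι] [CommRing R] [LinearOrder R]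
    [IsStrictOrderedRing R] (S T : ι → ι → ι → ι → R) :
    tensorDot S T ^ 2 ≤ tensorDot S S * tensorDot T T :=
  LinearMap.BilinForm.apply_sq_le_of_symm _
    (fun _ ↦ sum_nonneg fun _ _ ↦ sum_nonneg fun _ _ ↦ sum_nonneg fun _ _ ↦
      sum_nonneg fun _ _ ↦ mul_self_nonneg _)
    ⟨tensorDot_comm⟩ S T

section Field

variable {ι K : Type*} [Fintype ι] [DecidableEq ι] [Field K]

/-- The orthogonal projection of a square matrix onto the trace-free matrices (when its size is
nonzero in `K`). -/
def tracelessPart (A : Matrix ι ι K) : Matrix ι ι K :=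
  A - (trace A / Fintype.card ι) • 1

theorem trace_tracelessPart (hn : (Fintype.card ι : K) ≠ 0) (A : Matrix ι ι K) :
    trace (tracelessPart A) = 0 := by
  simp [tracelessPart, hn]

theorem trace_mul_tracelessPart (A C : Matrix ι ι K) :
    trace (A * tracelessPart C) = trace (A * C) - trace A * trace C / Fintype.card ι := by
  simp only [tracelessPart, mul_sub, mul_smul_comm, mul_one, trace_sub, trace_smul, smul_eq_mul]
  ring

theorem isSymm_tracelessPart {A : Matrix ι ι K} (hA : A.IsSymm) : (tracelessPart A).IsSymm :=
  hA.sub (isSymm_one.smul _)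

/-- The matrix `M` for which `½ B ∧ B + 1 ∧ M` has the Weyl part of `½ B ∧ B`, `t` times its
traceless Ricci part, and no scalar part, for symmetric trace-free `B`. For `t = 0` this is minus
the Schouten tensor of `½ B ∧ B`, whose Ricci contraction is `-B²`. -/
def schoutenCorrection (t : K) (B : Matrix ι ι K) : Matrix ι ι K :=
  ((1 - t) / (Fintype.card ι - 2)) • tracelessPart (B * B) +
    (trace (B * B) / (2 * Fintype.card ι * (Fintype.card ι - 1))) • 1

theorem isSymm_schoutenCorrection (t : K) {B : Matrix ι ι K} (hB : B.IsSymm) :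
    (schoutenCorrection t B).IsSymm := by
  have hBB : (B * B).IsSymm := by rw [IsSymm, transpose_mul, hB.eq]
  exact ((isSymm_tracelessPart hBB).smul _).add (isSymm_one.smul _)

theorem trace_schoutenCorrection (hn : (Fintype.card ι : K) ≠ 0) (t : K) (B : Matrix ι ι K) :
    trace (schoutenCorrection t B) = trace (B * B) / (2 * (Fintype.card ι - 1)) := by
  simp only [schoutenCorrection, trace_add, trace_smul, trace_tracelessPart hn, smul_eq_mul,
    mul_zero, zero_add, trace_one]
  field_simp

theorem trace_mul_schoutenCorrection (t : K) (A B : Matrix ι ι K) :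
    trace (A * schoutenCorrection t B) =
      (1 - t) / (Fintype.card ι - 2) *
          (trace (A * (B * B)) - trace A * trace (B * B) / Fintype.card ι) +
        trace (B * B) / (2 * Fintype.card ι * (Fintype.card ι - 1)) * trace A := by
  simp only [schoutenCorrection, mul_add, mul_smul_comm, mul_one, trace_add, trace_smul,
    trace_mul_tracelessPart, smul_eq_mul]

/-- The tensor `V + t R`, where `V` and `R` are the Weyl part and the traceless Ricci part of
`½ B ∧ B`, for symmetric trace-free `B`. -/
def weylAddSMulRicci (t : K) (B : Matrix ι ι K) : ι → ι → ι → ι → K :=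
  (1 / 2 : K) • kulkarniNomizu B B + kulkarniNomizu 1 (schoutenCorrection t B)

theorem tensorDot_weylAddSMulRicci [NeZero (2 : K)] {W : ι → ι → ι → ι → K} (hW : IsPairSkew W)
    (htr : ∀ j l, ∑ i, W i j i l = 0) (t : K) (B : Matrix ι ι K) :
    tensorDot W (weylAddSMulRicci t B) =
      2 * ∑ i, ∑ j, ∑ k, ∑ l, W i j k l * B i k * B j l := by
  have cubic : ∑ i, ∑ j, ∑ k, ∑ l, B i k * B j l * W i j k l =
      ∑ i, ∑ j, ∑ k, ∑ l, W i j k l * B i k * B j l := by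
    simp only [mul_comm, mul_left_comm]
  rw [weylAddSMulRicci, map_add, map_smul, tensorDot_comm W, tensorDot_comm W,
    tensorDot_one_kulkarniNomizu_eq_zero hW htr, tensorDot_kulkarniNomizu_left B B hW, cubic,
    smul_eq_mul]
  field_simp
  ring

theorem tensorDot_one_kulkarniNomizu_weylAddSMulRicci [NeZero (2 : K)]
    (hn2 : (Fintype.card ι : K) - 2 ≠ 0) (t : K) {B : Matrix ι ι K} (hB : B.IsSymm)
    (hB0 : trace B = 0) :
    tensorDot (kulkarniNomizu 1 B) (weylAddSMulRicci t B) = -4 * t * trace (B * B * B) := by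
  simp only [weylAddSMulRicci, map_add, map_smul, smul_eq_mul,
    tensorDot_comm (kulkarniNomizu 1 B) (kulkarniNomizu B B),
    tensorDot_kulkarniNomizu_self_one_kulkarniNomizu,
    tensorDot_one_kulkarniNomizu_one_kulkarniNomizu, hB.eq, hB0,
    (isSymm_schoutenCorrection t hB).eq, trace_mul_schoutenCorrection, ← mul_assoc B B B]
  field_simp
  ring

theorem tensorDot_half_kulkarniNomizu_add_self [NeZero (2 : K)] {B M : Matrix ι ι K}
    (hB : B.IsSymm) (hB0 : trace B = 0) (hM : M.IsSymm) :
    tensorDot ((1 / 2 : K) • kulkarniNomizu B B + kulkarniNomizu 1 M)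
        ((1 / 2 : K) • kulkarniNomizu B B + kulkarniNomizu 1 M) =
      2 * (trace (B * B) ^ 2 - trace (B * B * (B * B))) - 8 * trace (B * B * M) +
        4 * ((Fintype.card ι - 2) * trace (M * M) + trace M ^ 2) := by
  simp only [map_add, map_smul, LinearMap.add_apply, LinearMap.smul_apply, smul_eq_mul,
    tensorDot_comm (kulkarniNomizu 1 M) (kulkarniNomizu B B),
    tensorDot_kulkarniNomizu_self_one_kulkarniNomizu,
    tensorDot_one_kulkarniNomizu_one_kulkarniNomizu,
    tensorDot_kulkarniNomizu_kulkarniNomizu B B B B, hB.eq, hM.eq, hB0, ← mul_assoc]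
  field_simp
  ring

theorem tensorDot_weylAddSMulRicci_self [NeZero (2 : K)] (hn : (Fintype.card ι : K) ≠ 0)
    (hn1 : (Fintype.card ι : K) - 1 ≠ 0) (hn2 : (Fintype.card ι : K) - 2 ≠ 0) (t : K)
    {B : Matrix ι ι K} (hB : B.IsSymm) (hB0 : trace B = 0) :
    tensorDot (weylAddSMulRicci t B) (weylAddSMulRicci t B) =
      2 * (Fintype.card ι - 2) / (Fintype.card ι - 1) * trace (B * B) ^ 2 +
        2 * (2 * t ^ 2 - Fintype.card ι) / (Fintype.card ι - 2) *
          (trace (B * B * (B * B)) - trace (B * B) ^ 2 / Fintype.card ι) := by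
  have two_ne : (2 : K) ≠ 0 := NeZero.ne 2
  rw [weylAddSMulRicci,
    tensorDot_half_kulkarniNomizu_add_self hB hB0 (isSymm_schoutenCorrection t hB),
    trace_mul_schoutenCorrection t (schoutenCorrection t B),
    trace_mul_comm (schoutenCorrection t B) (B * B), trace_mul_schoutenCorrection,
    trace_schoutenCorrection hn]
  field_simp
  ring

theorem tensorDot_add_smul_weylAddSMulRicci [NeZero (2 : K)]
    (hn2 : (Fintype.card ι : K) - 2 ≠ 0) {t : K} (ht : 2 * t ^ 2 = Fintype.card ι)
    {W : ι → ι → ι → ι → K} (hW : IsPairSkew W) (htr : ∀ j l, ∑ i, W i j i l = 0)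
    {B : Matrix ι ι K} (hB : B.IsSymm) (hB0 : trace B = 0) :
    tensorDot (W + (t / (Fintype.card ι - 2)) • kulkarniNomizu 1 B) (weylAddSMulRicci t B) =
      -2 * (Fintype.card ι / (Fintype.card ι - 2) * trace (B * B * B) -
        ∑ i, ∑ j, ∑ k, ∑ l, W i j k l * B i k * B j l) := by
  rw [map_add, map_smul, LinearMap.add_apply, LinearMap.smul_apply, smul_eq_mul,
    tensorDot_weylAddSMulRicci hW htr,
    tensorDot_one_kulkarniNomizu_weylAddSMulRicci hn2 t hB hB0]
  linear_combination -2 / (Fintype.card ι - 2 : K) * trace (B * B * B) * ht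

end Field

section Real

variable {ι : Type*} [Fintype ι]

theorem sq_trace_cube_sub_sum_le (hn : 3 ≤ Fintype.card ι)
    {W : ι → ι → ι → ι → ℝ} (hW : IsPairSkew W) (htr : ∀ j l, ∑ i, W i j i l = 0)
    {B : Matrix ι ι ℝ} (hB : B.IsSymm) (hB0 : trace B = 0) :
    (Fintype.card ι / (Fintype.card ι - 2) * trace (B * B * B) -
        ∑ i, ∑ j, ∑ k, ∑ l, W i j k l * B i k * B j l) ^ 2 ≤
      (Fintype.card ι - 2) / (2 * (Fintype.card ι - 1)) *
        (tensorDot W W + 2 * Fintype.card ι / (Fintype.card ι - 2) * trace (B * B)) *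
        trace (B * B) ^ 2 := by
  classical
  have hn3 : (3 : ℝ) ≤ Fintype.card ι := by exact_mod_cast hn
  have hn0 : (Fintype.card ι : ℝ) ≠ 0 := by linarith
  have hn1 : (Fintype.card ι : ℝ) - 1 ≠ 0 := by linarith
  have hn2 : (Fintype.card ι : ℝ) - 2 ≠ 0 := by linarith
  obtain ⟨t, ht⟩ : ∃ t : ℝ, 2 * t ^ 2 = Fintype.card ι :=
    ⟨√(Fintype.card ι / 2), by rw [Real.sq_sqrt (by positivity)]; ring⟩
  have weight : 4 * (t ^ 2 / ((Fintype.card ι : ℝ) - 2) ^ 2) * (Fintype.card ι - 2) =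
      2 * Fintype.card ι / (Fintype.card ι - 2) := by
    rw [← ht]
    field_simp
    ring
  let U := W + (t / (Fintype.card ι - 2)) • kulkarniNomizu 1 B
  let T := weylAddSMulRicci t B
  calc
    _ = tensorDot U T ^ 2 / 4 := by
      rw [tensorDot_add_smul_weylAddSMulRicci hn2 ht hW htr hB hB0]
      ring
    _ ≤ tensorDot U U * tensorDot T T / 4 := by
      gcongr
      exact tensorDot_sq_le U T
    _ = _ := by
      rw [tensorDot_add_smul_one_kulkarniNomizu_self hW htr hB hB0,
        tensorDot_weylAddSMulRicci_self hn0 hn1 hn2 t hB hB0, ht, div_pow, weight]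
      field_simp
      ring

theorem pointwise_weyl_ricci_estimate_general (hn : 3 ≤ Fintype.card ι)
    (W : ι → ι → ι → ι → ℝ)
    (hanti1 : ∀ i j k l, W i j k l = -W j i k l)
    (hanti2 : ∀ i j k l, W i j k l = -W i j l k)
    (htrfree : ∀ j l, ∑ i, W i j i l = 0)
    (B : ι → ι → ℝ)
    (hBsymm : ∀ i j, B i j = B j i)
    (hBtr : ∑ i, B i i = 0) :
    |((Fintype.card ι : ℝ) / ((Fintype.card ι : ℝ) - 2)) *
          (∑ i, ∑ j, ∑ k, B i j * B j k * B i k) -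
        ∑ i, ∑ j, ∑ k, ∑ l, W i j k l * B i k * B j l| ≤
      Real.sqrt (((Fintype.card ι : ℝ) - 2) / (2 * ((Fintype.card ι : ℝ) - 1))) *
        Real.sqrt ((∑ i, ∑ j, ∑ k, ∑ l, W i j k l ^ 2) +
          (2 * (Fintype.card ι : ℝ) / ((Fintype.card ι : ℝ) - 2)) * ∑ i, ∑ j, B i j ^ 2) *
        (∑ i, ∑ j, B i j ^ 2) := by
  have hB : (of B).IsSymm := IsSymm.ext fun i j ↦ hBsymm j i
  have hW : IsPairSkew W := ⟨fun i j k l ↦ hanti1 j i k l, fun i j k l ↦ hanti2 i j l k⟩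
  have square : trace (of B * of B) = ∑ i, ∑ j, B i j ^ 2 := trace_mul_self_of_isSymm hB
  have cube : trace (of B * of B * of B) = ∑ i, ∑ j, ∑ k, B i j * B j k * B i k :=
    trace_mul_mul_self_of_isSymm hB
  have normSq : tensorDot W W = ∑ i, ∑ j, ∑ k, ∑ l, W i j k l ^ 2 := by
    simp only [tensorDot_apply, sq]
  have estimate := sq_trace_cube_sub_sum_le hn hW htrfree hB hBtr
  rw [square, cube, normSq] at estimate
  have hn3 : (3 : ℝ) ≤ Fintype.card ι := by exact_mod_cast hn
  have coeff_nonneg : 0 ≤ ((Fintype.card ι : ℝ) - 2) / (2 * (Fintype.card ι - 1)) :=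
    div_nonneg (by linarith) (by linarith)
  have normSq_nonneg : 0 ≤ ∑ i, ∑ j, B i j ^ 2 := by positivity
  refine (Real.abs_le_sqrt estimate).trans_eq ?_
  rw [Real.sqrt_mul' _ (sq_nonneg _), Real.sqrt_mul coeff_nonneg, Real.sqrt_sq normSq_nonneg]

end Real

theorem pointwise_weyl_ricci_estimate (n : ℕ) (hn : 3 ≤ n)
    (W : Fin n → Fin n → Fin n → Fin n → ℝ)
    (hanti1 : ∀ i j k l, W i j k l = -W j i k l)
    (hanti2 : ∀ i j k l, W i j k l = -W i j l k)
    (hpair : ∀ i j k l, W i j k l = W k l i j)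
    (hbianchi : ∀ i j k l, W i j k l + W i k l j + W i l j k = 0)
    (htrfree : ∀ j l, ∑ i, W i j i l = 0)
    (B : Fin n → Fin n → ℝ)
    (hBsymm : ∀ i j, B i j = B j i)
    (hBtr : ∑ i, B i i = 0) :
    |((n : ℝ) / ((n : ℝ) - 2)) * (∑ i, ∑ j, ∑ k, B i j * B j k * B i k) -
        ∑ i, ∑ j, ∑ k, ∑ l, W i j k l * B i k * B j l| ≤
      Real.sqrt (((n : ℝ) - 2) / (2 * ((n : ℝ) - 1))) *
        Real.sqrt ((∑ i, ∑ j, ∑ k, ∑ l, W i j k l ^ 2) +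
          (2 * (n : ℝ) / ((n : ℝ) - 2)) * ∑ i, ∑ j, B i j ^ 2) *
        (∑ i, ∑ j, B i j ^ 2) := by
  simpa only [Fintype.card_fin] using pointwise_weyl_ricci_estimate_general
    (by simpa only [Fintype.card_fin] using hn) W hanti1 hanti2 htrfree B hBsymm hBtr
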